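/- For every condition ψ in negation normal form and every 3VL valuation v, the 3VL value of ψ under v is T if and only if the absorbed 2VL evaluation of ψ under v is true. Consequently, a condition φ evaluates to T under a 3VL valuation v if and only if the absorbed 2VL evaluation under v of any negation-normal-form condition that is 3VL-equivalent to φ is true. -/

import Mathlib

/-- Truth values of Kleene's strong three-valued logic. -/
inductive TV where
  | T | F | U
deriving DecidableEq, Repr

/-- The order F < U < T, encoded numerically. -/
def TV.toNat : TV → ℕ
  | .F => 0
  | .U => 1
  | .T => 2

/-- Kleene negation: swaps T and F, fixes U. -/
def TV.neg : TV → TV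
  | .T => .F
  | .F => .T
  | .U => .U

/-- Kleene conjunction: minimum w.r.t. F < U < T. -/
def TV.and (a b : TV) : TV := if a.toNat ≤ b.toNat then a else b

/-- Kleene disjunction: maximum w.r.t. F < U < T. -/
def TV.or (a b : TV) : TV := if a.toNat ≤ b.toNat then b else a

/-- Conditions over a set `A` of atoms, built from atoms by ¬, ∧, ∨. -/
inductive Cond (A : Type) where
  | atom : A → Cond A
  | not : Cond A → Cond A
  | and : Cond A → Cond A → Cond A
  | or : Cond A → Cond A → Cond A

/-- The 3VL value of a condition under a valuation `v : A → TV`. -/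
def Cond.eval3 {A : Type} (v : A → TV) : Cond A → TV
  | .atom a => v a
  | .not c => (c.eval3 v).neg
  | .and c d => TV.and (c.eval3 v) (d.eval3 v)
  | .or c d => TV.or (c.eval3 v) (d.eval3 v)

/-- Negation normal form: negation occurs only directly in front of atoms. -/
inductive Cond.NNF {A : Type} : Cond A → Prop
  | atom (a : A) : Cond.NNF (.atom a)
  | natom (a : A) : Cond.NNF (.not (.atom a))
  | and {c d : Cond A} : Cond.NNF c → Cond.NNF d → Cond.NNF (.and c d)
  | or {c d : Cond A} : Cond.NNF c → Cond.NNF d → Cond.NNF (.or c d)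

/-- Size of a condition: total number of atom occurrences and connectives. -/
def Cond.size {A : Type} : Cond A → ℕ
  | .atom _ => 1
  | .not c => c.size + 1
  | .and c d => c.size + d.size + 1
  | .or c d => c.size + d.size + 1


/-- The absorbed 2VL evaluation of an NNF condition: an atom `a` is true iff
`v a = T`, a negated atom `¬a` is true iff `v a = F`, and ∧, ∨ are the
classical Boolean connectives.  (The value on non-NNF negations is
irrelevant.) -/
def Cond.eval2 {A : Type} (v : A → TV) : Cond A → Bool
  | .atom a => decide (v a = TV.T)
  | .not (.atom a) => decide (v a = TV.F)
  | .not _ => false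
  | .and c d => c.eval2 v && d.eval2 v
  | .or c d => c.eval2 v || d.eval2 v

/-- An NNF condition evaluates to T in 3VL iff its absorbed 2VL evaluation is
true; consequently a condition evaluates to T in 3VL iff the absorbed 2VL
evaluation of any 3VL-equivalent NNF condition is true. -/
theorem eval3_T_iff_absorbed_eval2 {A : Type} :
    (∀ ψ : Cond A, ψ.NNF → ∀ v : A → TV,
      (ψ.eval3 v = TV.T ↔ ψ.eval2 v = true)) ∧
    (∀ φ ψ : Cond A, ψ.NNF → (∀ v : A → TV, ψ.eval3 v = φ.eval3 v) →
      ∀ v : A → TV, (φ.eval3 v = TV.T ↔ ψ.eval2 v = true)) := by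
  have key : ∀ ψ : Cond A, ψ.NNF → ∀ v : A → TV,
      (ψ.eval3 v = TV.T ↔ ψ.eval2 v = true) := by
    intro ψ h v
    have hand : ∀ a b : TV, TV.and a b = TV.T ↔ a = TV.T ∧ b = TV.T := by
      intro a b
      cases a <;> cases b <;> decide
    have hor : ∀ a b : TV, TV.or a b = TV.T ↔ a = TV.T ∨ b = TV.T := by
      intro a b
      cases a <;> cases b <;> decide
    have hneg : ∀ a : TV, TV.neg a = TV.T ↔ a = TV.F := by
      intro a
      cases a <;> decide
    induction h with
    | atom a => simp [Cond.eval3, Cond.eval2]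
    | natom a => simp [Cond.eval3, Cond.eval2, hneg]
    | and _ _ ihc ihd => simp [Cond.eval3, Cond.eval2, hand, ihc, ihd]
    | or _ _ ihc ihd => simp [Cond.eval3, Cond.eval2, hor, ihc, ihd]
  refine ⟨key, fun φ ψ h he v => ?_⟩
  rw [← he v]
  exact key ψ h v
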